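/- There is a universal constant C such that the following holds. Fix a symmetric matrix A ∈ ℝ^{n×n}, δ ∈ (0,1), and 0 < Δ ≤ ‖A‖_2. Let D ∈ ℝ^{n×n} be a random diagonal matrix whose diagonal entries are drawn independently and uniformly from [−Δ, Δ], and let Ã = A + D with eigenvalues λ_1(Ã) ≥ … ≥ λ_n(Ã). Then, with probability at least 1 − δ, min_{i∈{1,…,n−1}} |λ_i(Ã) − λ_{i+1}(Ã)| / |λ_{i+1}(Ã)| ≥ (δ/(C n²))·(Δ²/‖A‖_2²). -/

import Mathlib

open MeasureTheory ProbabilityTheory Matrix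

noncomputable section

/-- Euclidean (ℓ₂) norm of a vector. -/
def l2norm {n : ℕ} (v : Fin n → ℝ) : ℝ := Real.sqrt (∑ i, v i ^ 2)

/-- Spectral (ℓ₂ operator) norm of a matrix. -/
def specNorm {n d : ℕ} (M : Matrix (Fin n) (Fin d) ℝ) : ℝ :=
  sSup {c : ℝ | ∃ v : Fin d → ℝ, l2norm v ≤ 1 ∧ c = l2norm (M.mulVec v)}

/-- Frobenius norm of a matrix. -/
def frobNorm {n d : ℕ} (M : Matrix (Fin n) (Fin d) ℝ) : ℝ :=
  Real.sqrt (∑ i, ∑ j, M i j ^ 2)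

/-- Column span of a matrix. -/
def colSpan {n : ℕ} {m : Type*} (M : Matrix (Fin n) m ℝ) : Submodule ℝ (Fin n → ℝ) :=
  Submodule.span ℝ (Set.range fun j i => M i j)

/-- `IsSVD A U V σ` : `A = U Σ Vᵀ` is a singular value decomposition of `A`, where
`σ 0 ≥ σ 1 ≥ … ≥ 0` are the singular values (0-indexed, `σ i = 0` for `i ≥ min n d`). -/
def IsSVD {n d : ℕ} (A : Matrix (Fin n) (Fin d) ℝ) (U : Matrix (Fin n) (Fin n) ℝ)
    (V : Matrix (Fin d) (Fin d) ℝ) (σ : ℕ → ℝ) : Prop :=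
  Uᵀ * U = 1 ∧ Vᵀ * V = 1 ∧
  (∀ i j : ℕ, i ≤ j → σ j ≤ σ i) ∧ (∀ i, 0 ≤ σ i) ∧
  (∀ i, min n d ≤ i → σ i = 0) ∧
  A = U * (Matrix.of fun (i : Fin n) (j : Fin d) => if (i : ℕ) = (j : ℕ) then σ (i : ℕ) else 0) * Vᵀ

/-- The first `k` columns of a square matrix `U` (e.g. the top-`k` left singular vectors). -/
def topCols {n k : ℕ} (U : Matrix (Fin n) (Fin n) ℝ) (hk : k ≤ n) :
    Matrix (Fin n) (Fin k) ℝ :=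
  Matrix.of fun i j => U i (Fin.castLE hk j)

/-- The best rank-`k` approximation `A_k = U_k U_kᵀ A` of `A`. -/
def rankApprox {n d : ℕ} (k : ℕ) (A : Matrix (Fin n) (Fin d) ℝ)
    (U : Matrix (Fin n) (Fin n) ℝ) (hk : k ≤ n) : Matrix (Fin n) (Fin d) ℝ :=
  topCols U hk * (topCols U hk)ᵀ * A

/-- The law of a vector in `ℝⁿ` with i.i.d. standard Gaussian entries. -/
def stdGaussian (n : ℕ) : Measure (Fin n → ℝ) :=
  Measure.pi fun _ => gaussianReal 0 1

/-- The law of an `n × b` matrix with i.i.d. standard Gaussian entries. -/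
def stdGaussianMat (n b : ℕ) : Measure (Fin n → Fin b → ℝ) :=
  Measure.pi fun _ => Measure.pi fun _ => gaussianReal 0 1

/-- `U'` consists of `k` top (unit-norm, mutually orthogonal) eigenvectors of the symmetric
matrix `M`: the first `k` columns of an orthogonal eigenbasis whose eigenvalues are sorted
in decreasing order. -/
def IsTopEigenvectors {m k : ℕ} (M : Matrix (Fin m) (Fin m) ℝ)
    (U' : Matrix (Fin m) (Fin k) ℝ) : Prop :=
  ∃ (W : Matrix (Fin m) (Fin m) ℝ) (μ : Fin m → ℝ) (hk : k ≤ m),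
    Wᵀ * W = 1 ∧ (∀ i j : Fin m, i ≤ j → μ j ≤ μ i) ∧
    M = W * Matrix.diagonal μ * Wᵀ ∧
    U' = Matrix.of fun i j => W i (Fin.castLE hk j)

/-- `Q` is a possible output of the single vector Krylov method (Algorithm 1) on `A` with
target rank `k`, starting vector `x` and `t` iterations. -/
def IsKrylovOutput {n d k : ℕ} (A : Matrix (Fin n) (Fin d) ℝ) (t : ℕ)
    (x : Fin n → ℝ) (Q : Matrix (Fin n) (Fin k) ℝ) : Prop :=
  ∃ (m : ℕ) (Z : Matrix (Fin n) (Fin m) ℝ) (U' : Matrix (Fin m) (Fin k) ℝ),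
    Zᵀ * Z = 1 ∧
    colSpan Z = Submodule.span ℝ
      {v : Fin n → ℝ | ∃ j ≤ t, v = ((A * Aᵀ) ^ j).mulVec x} ∧
    IsTopEigenvectors (Zᵀ * (A * Aᵀ) * Z) U' ∧
    Q = Z * U'

/-- `Q` is a possible output of the block Krylov method (Algorithm 2) on `A` with
target rank `k`, starting block `B` and `t` iterations. -/
def IsBlockKrylovOutput {n d k b : ℕ} (A : Matrix (Fin n) (Fin d) ℝ) (t : ℕ)
    (B : Matrix (Fin n) (Fin b) ℝ) (Q : Matrix (Fin n) (Fin k) ℝ) : Prop :=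
  ∃ (m : ℕ) (Z : Matrix (Fin n) (Fin m) ℝ) (U' : Matrix (Fin m) (Fin k) ℝ),
    Zᵀ * Z = 1 ∧
    colSpan Z = Submodule.span ℝ
      {v : Fin n → ℝ | ∃ j ≤ t, ∃ c : Fin b, v = ((A * Aᵀ) ^ j).mulVec (fun i => B i c)} ∧
    IsTopEigenvectors (Zᵀ * (A * Aᵀ) * Z) U' ∧
    Q = Z * U'

/-- `Q` is a possible output of single vector simultaneous iteration on `A` with
target rank `k`, starting vector `x`, `t` iterations, and memory budget `ℓ`. -/
def IsSimIterOutput {n d k : ℕ} (A : Matrix (Fin n) (Fin d) ℝ) (t ℓ : ℕ)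
    (x : Fin n → ℝ) (Q : Matrix (Fin n) (Fin k) ℝ) : Prop :=
  ∃ (m : ℕ) (Z : Matrix (Fin n) (Fin m) ℝ) (U' : Matrix (Fin m) (Fin k) ℝ),
    Zᵀ * Z = 1 ∧
    colSpan Z = Submodule.span ℝ
      {v : Fin n → ℝ | ∃ j, t - ℓ + 1 ≤ j ∧ j ≤ t ∧ v = ((A * Aᵀ) ^ j).mulVec x} ∧
    IsTopEigenvectors (Zᵀ * (A * Aᵀ) * Z) U' ∧
    Q = Z * U'

/-- `B` is a `(k,L)`-good starting matrix for a matrix with top-`k` left singular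
vectors `Uk` (Definition 2.1 / `def:lgood`). -/
def IsGoodStart {n k : ℕ} (Uk : Matrix (Fin n) (Fin k) ℝ)
    (B : Matrix (Fin n) (Fin k) ℝ) (L : ℝ) : Prop :=
  ∃ Q : Matrix (Fin n) (Fin k) ℝ, Qᵀ * Q = 1 ∧ colSpan Q = colSpan B ∧
    IsUnit (Ukᵀ * Q) ∧ specNorm ((Ukᵀ * Q)⁻¹) ^ 2 ≤ L

/-- Generalized `(k,L)`-good starting matrix (Definition `def:lgood-small-block`):
`B` may have any number of columns; some orthonormal `Q` with columns inside the column
span of `B` has `UkᵀQ` invertible with `‖(UkᵀQ)⁻¹‖₂² ≤ L`. -/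
def IsGoodStartGen {n k : ℕ} {m : Type*} [Fintype m] (Uk : Matrix (Fin n) (Fin k) ℝ)
    (B : Matrix (Fin n) m ℝ) (L : ℝ) : Prop :=
  ∃ Q : Matrix (Fin n) (Fin k) ℝ, Qᵀ * Q = 1 ∧
    (∀ j : Fin k, (fun i => Q i j) ∈ colSpan B) ∧
    IsUnit (Ukᵀ * Q) ∧ specNorm ((Ukᵀ * Q)⁻¹) ^ 2 ≤ L

/-- Schatten `p`-norm of a matrix: `(∑ i σ_i(M)^p)^(1/p)`, where the singular values are
the square roots of the eigenvalues of `M Mᵀ`. -/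
def schattenNorm {n d : ℕ} (M : Matrix (Fin n) (Fin d) ℝ) (p : ℝ) : ℝ :=
  (∑ i, Real.sqrt ((Matrix.isHermitian_mul_conjTranspose_self M).eigenvalues i) ^ p) ^ (1 / p)



namespace DPG

variable {n : ℕ}

/-- shifted matrix -/
def Bm (A : Matrix (Fin n) (Fin n) ℝ) (E : ℝ) (D : Fin n → ℝ) : Matrix (Fin n) (Fin n) ℝ :=
  A + Matrix.diagonal D - E • (1 : Matrix (Fin n) (Fin n) ℝ)

/-- regularized square -/
def Mm (A : Matrix (Fin n) (Fin n) ℝ) (E ε : ℝ) (D : Fin n → ℝ) : Matrix (Fin n) (Fin n) ℝ :=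
  Bm A E D * Bm A E D + ε ^ 2 • (1 : Matrix (Fin n) (Fin n) ℝ)

/-- inverse -/
def Km (A : Matrix (Fin n) (Fin n) ℝ) (E ε : ℝ) (D : Fin n → ℝ) : Matrix (Fin n) (Fin n) ℝ :=
  (Mm A E ε D)⁻¹

lemma Bm_symm {A : Matrix (Fin n) (Fin n) ℝ} (hA : A.IsSymm) (E : ℝ) (D : Fin n → ℝ) :
    (Bm A E D)ᵀ = Bm A E D := by
  simp [Bm, hA.eq]

lemma Mm_posDef {A : Matrix (Fin n) (Fin n) ℝ} (hA : A.IsSymm) (E : ℝ) {ε : ℝ} (hε : 0 < ε)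
    (D : Fin n → ℝ) : (Mm A E ε D).PosDef := by
  have h1 : (Bm A E D * Bm A E D).PosSemidef := by
    have := Matrix.posSemidef_conjTranspose_mul_self (Bm A E D)
    rwa [Matrix.conjTranspose_eq_transpose_of_trivial, Bm_symm hA] at this
  have h2 : (ε ^ 2 • (1 : Matrix (Fin n) (Fin n) ℝ)).PosDef :=
    Matrix.PosDef.one.smul (by positivity)
  exact Matrix.PosDef.posSemidef_add h1 h2

lemma Km_posDef {A : Matrix (Fin n) (Fin n) ℝ} (hA : A.IsSymm) (E : ℝ) {ε : ℝ} (hε : 0 < ε)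
    (D : Fin n → ℝ) : (Km A E ε D).PosDef := (Mm_posDef hA E hε D).inv

lemma Mm_mul_Km {A : Matrix (Fin n) (Fin n) ℝ} (hA : A.IsSymm) (E : ℝ) {ε : ℝ} (hε : 0 < ε)
    (D : Fin n → ℝ) : Mm A E ε D * Km A E ε D = 1 :=
  Matrix.mul_nonsing_inv _ ((Matrix.isUnit_iff_isUnit_det _).1 (Mm_posDef hA E hε D).isUnit)

lemma Km_mul_Mm {A : Matrix (Fin n) (Fin n) ℝ} (hA : A.IsSymm) (E : ℝ) {ε : ℝ} (hε : 0 < ε)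
    (D : Fin n → ℝ) : Km A E ε D * Mm A E ε D = 1 :=
  Matrix.nonsing_inv_mul _ ((Matrix.isUnit_iff_isUnit_det _).1 (Mm_posDef hA E hε D).isUnit)

lemma Km_diag_nonneg {A : Matrix (Fin n) (Fin n) ℝ} (hA : A.IsSymm) (E : ℝ) {ε : ℝ} (hε : 0 < ε)
    (D : Fin n → ℝ) (j : Fin n) : 0 ≤ Km A E ε D j j :=
  (Km_posDef hA E hε D).posSemidef.diag_nonneg

lemma Bm_update_mulVec (A : Matrix (Fin n) (Fin n) ℝ) (E : ℝ) (D : Fin n → ℝ) (j : Fin n) (t : ℝ)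
    (v : Fin n → ℝ) : Bm A E (Function.update D j (D j + t)) *ᵥ v =
      Bm A E D *ᵥ v + (t * v j) • Pi.single j 1 := by
  have : Matrix.diagonal (Function.update D j (D j + t)) =
      Matrix.diagonal D + Matrix.diagonal (Pi.single j t) := by
    rw [Matrix.diagonal_add]
    congr 1
    ext i
    by_cases h : i = j
    · subst h; simp
    · simp [h]
  ext i
  simp only [Bm, this, Matrix.add_mulVec, Matrix.sub_mulVec, Pi.add_apply, Pi.sub_apply,
    Matrix.mulVec_diagonal]
  by_cases h : i = j
  · subst h; simp; ring
  · simp [h]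

/-- rank-one formula -/
lemma Km_update {A : Matrix (Fin n) (Fin n) ℝ} (hA : A.IsSymm) (E : ℝ) {ε : ℝ} (hε : 0 < ε)
    (D : Fin n → ℝ) (j : Fin n) : ∃ p q : ℝ, 0 ≤ q ∧ ∀ t,
      ε * Km A E ε (Function.update D j (D j + t)) j j = q / ((1 + t * p) ^ 2 + t ^ 2 * q ^ 2) := by
  set K := Km A E ε D with hK
  set B := Bm A E D with hB
  set e : Fin n → ℝ := Pi.single j 1 with he
  have hMK := Mm_mul_Km hA E hε D
  set w := ε • (K *ᵥ e) with hw
  set u := B *ᵥ (K *ᵥ e) with hu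
  have hBw : B *ᵥ w = ε • u := by rw [hw, Matrix.mulVec_smul]
  have hBu : B *ᵥ u + ε • w = e := by
    have : (Mm A E ε D * K) *ᵥ e = e := by rw [hMK, Matrix.one_mulVec]
    rw [← Matrix.mulVec_mulVec, Mm, Matrix.add_mulVec, ← Matrix.mulVec_mulVec, Matrix.smul_mulVec,
      Matrix.one_mulVec] at this
    rw [hu, hw, smul_smul, ← pow_two]
    exact this
  have hq0 : 0 < K j j := (Km_posDef hA E hε D).diag_pos
  have hwj : w j = ε * K j j := by simp [hw, he]
  have hq : 0 < w j := by rw [hwj]; positivity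
  clear_value w u
  obtain ⟨p, hp⟩ : ∃ p, p = u j := ⟨_, rfl⟩
  obtain ⟨q, hqq⟩ : ∃ q, q = w j := ⟨_, rfl⟩
  rw [← hqq] at hq
  refine ⟨p, q, hq.le, fun t => ?_⟩
  have hN : 0 < (1 + t * p) ^ 2 + t ^ 2 * q ^ 2 := by
    by_cases ht : t = 0
    · subst ht; simp
    · have : 0 < t ^ 2 * q ^ 2 := by positivity
      nlinarith [sq_nonneg (1 + t * p)]
  set N := (1 + t * p) ^ 2 + t ^ 2 * q ^ 2 with hNdef
  set D' := Function.update D j (D j + t) with hD'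
  set w' := (1 + t * p) • w - (t * q) • u with hw'
  set u' := (1 + t * p) • u + (t * q) • w with hu'
  have h1 : Bm A E D' *ᵥ w' = ε • u' := by
    rw [hD', Bm_update_mulVec, ← hB, hw', Matrix.mulVec_sub, Matrix.mulVec_smul, Matrix.mulVec_smul,
      hBw, eq_sub_of_add_eq hBu]
    ext i
    simp only [hu', Pi.add_apply, Pi.sub_apply, Pi.smul_apply, smul_eq_mul, ← he, ← hp, ← hqq]
    ring
  have h2 : Bm A E D' *ᵥ u' + ε • w' = N • e := by
    rw [hD', Bm_update_mulVec, ← hB, hu', Matrix.mulVec_add, Matrix.mulVec_smul, Matrix.mulVec_smul,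
      hBw, eq_sub_of_add_eq hBu]
    ext i
    simp only [hw', Pi.add_apply, Pi.sub_apply, Pi.smul_apply, smul_eq_mul, ← he, ← hp, ← hqq, hNdef]
    ring
  have h3 : Mm A E ε D' *ᵥ w' = (ε * N) • e := by
    rw [Mm, Matrix.add_mulVec, ← Matrix.mulVec_mulVec, h1, Matrix.mulVec_smul, Matrix.smul_mulVec,
      Matrix.one_mulVec, eq_sub_of_add_eq h2]
    ext i
    simp only [Pi.add_apply, Pi.sub_apply, Pi.smul_apply, smul_eq_mul]
    ring
  have h4 : w' = (ε * N) • (Km A E ε D' *ᵥ e) := by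
    rw [← Matrix.mulVec_smul, ← h3, Matrix.mulVec_mulVec, Km_mul_Mm hA E hε, Matrix.one_mulVec]
  have h5 : w' j = ε * N * Km A E ε D' j j := by
    rw [h4]; simp [he]
  have h6 : w' j = q := by
    simp only [hw', Pi.sub_apply, Pi.smul_apply, smul_eq_mul, ← hp, ← hqq]
    ring
  rw [eq_div_iff hN.ne']
  linarith

lemma trace_ge {K : Matrix (Fin n) (Fin n) ℝ} (hK : K.PosSemidef) (v : Fin n → ℝ)
    (hv : v ⬝ᵥ v = 1) : v ⬝ᵥ (K *ᵥ v) ≤ ∑ j, K j j := by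
  obtain ⟨L, hL⟩ : ∃ L : Matrix (Fin n) (Fin n) ℝ, K = Lᴴ * L := by
    open MatrixOrder in
    exact CStarAlgebra.nonneg_iff_eq_star_mul_self.mp hK.nonneg
  rw [Matrix.conjTranspose_eq_transpose_of_trivial] at hL
  have h1 : v ⬝ᵥ (K *ᵥ v) = ∑ i, (∑ k, L i k * v k) ^ 2 := by
    rw [hL, ← Matrix.mulVec_mulVec, Matrix.dotProduct_mulVec, Matrix.vecMul_transpose]
    simp [dotProduct, Matrix.mulVec, pow_two]
  have h2 : ∑ j, K j j = ∑ i, ∑ k, L i k ^ 2 := by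
    rw [hL, Finset.sum_comm]
    simp [Matrix.mul_apply, pow_two]
  rw [h1, h2]
  apply Finset.sum_le_sum
  intro i _
  have := Finset.sum_mul_sq_le_sq_mul_sq Finset.univ (fun k => L i k) v
  have hv' : ∑ k, v k ^ 2 = 1 := by simpa [dotProduct, pow_two] using hv
  rwa [hv', mul_one] at this

lemma trace_bound {A : Matrix (Fin n) (Fin n) ℝ} (hA : A.IsSymm) (E : ℝ) {ε : ℝ} (hε : 0 < ε)
    (D : Fin n → ℝ) (v : Fin n → ℝ) (hv : v ⬝ᵥ v = 1)
    (h : (Bm A E D *ᵥ v) ⬝ᵥ (Bm A E D *ᵥ v) ≤ ε ^ 2) :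
    1 ≤ ∑ j, 2 * ε ^ 2 * Km A E ε D j j := by
  rw [← Finset.mul_sum]
  have h1 := trace_ge (Km_posDef hA E hε D).posSemidef v hv
  set K := Km A E ε D
  set M := Mm A E ε D
  have hKM : K * M = 1 := Km_mul_Mm hA E hε D
  have hMK : M * K = 1 := Mm_mul_Km hA E hε D
  have hvM : v ⬝ᵥ (M *ᵥ v) ≤ 2 * ε ^ 2 := by
    have : v ⬝ᵥ (M *ᵥ v) = (Bm A E D *ᵥ v) ⬝ᵥ (Bm A E D *ᵥ v) + ε ^ 2 := by
      simp only [M, Mm]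
      rw [Matrix.add_mulVec, dotProduct_add, ← Matrix.mulVec_mulVec, Matrix.dotProduct_mulVec,
        Matrix.smul_mulVec, Matrix.one_mulVec, dotProduct_smul, hv, ← Matrix.mulVec_transpose,
        Bm_symm hA]
      simp
    linarith
  have hps := (Km_posDef hA E hε D).posSemidef.dotProduct_mulVec_nonneg (v - (1 / (2 * ε ^ 2)) • (M *ᵥ v))
  have hMs : Mᵀ = M := by
    simp only [M, Mm]
    simp [Bm_symm hA]
  have hexp : (v - (1 / (2 * ε ^ 2)) • (M *ᵥ v)) ⬝ᵥ (K *ᵥ (v - (1 / (2 * ε ^ 2)) • (M *ᵥ v))) =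
      v ⬝ᵥ (K *ᵥ v) - 2 * (1 / (2 * ε ^ 2)) + (1 / (2 * ε ^ 2)) ^ 2 * (v ⬝ᵥ (M *ᵥ v)) := by
    have e1 : K *ᵥ (M *ᵥ v) = v := by rw [Matrix.mulVec_mulVec, hKM, Matrix.one_mulVec]
    have e2 : (M *ᵥ v) ⬝ᵥ (K *ᵥ v) = 1 := by
      rw [← hMs, Matrix.mulVec_transpose, ← Matrix.dotProduct_mulVec, Matrix.mulVec_mulVec, hMK,
        Matrix.one_mulVec, hv]
    have e3 : (M *ᵥ v) ⬝ᵥ v = v ⬝ᵥ (M *ᵥ v) := dotProduct_comm _ _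
    rw [Matrix.mulVec_sub, Matrix.mulVec_smul, e1]
    simp only [sub_dotProduct, dotProduct_sub, smul_dotProduct, dotProduct_smul, e2, hv, e3,
      smul_eq_mul]
    ring
  have hps' : 0 ≤ v ⬝ᵥ (K *ᵥ v) - 2 * (1 / (2 * ε ^ 2)) + (1 / (2 * ε ^ 2)) ^ 2 * (v ⬝ᵥ (M *ᵥ v)) := by
    rw [← hexp]; simpa using hps
  have hs : 0 < 2 * ε ^ 2 := by positivity
  set s := 2 * ε ^ 2
  have h6 : (1 / s) ^ 2 * (v ⬝ᵥ (M *ᵥ v)) ≤ (1 / s) ^ 2 * s := by gcongr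
  have h7 : (1 / s) ^ 2 * s = 1 / s := by field_simp
  have h8 : 1 / s ≤ ∑ j, K j j := by linarith
  calc 1 = s * (1 / s) := by field_simp
    _ ≤ _ := by gcongr

/-- Two orthonormal eigenvectors with eigenvalues near `E`. -/
def Bad (A : Matrix (Fin n) (Fin n) ℝ) (E ε : ℝ) (D : Fin n → ℝ) : Prop :=
  ∃ (x y : Fin n → ℝ) (l m : ℝ), x ⬝ᵥ x = 1 ∧ y ⬝ᵥ y = 1 ∧ x ⬝ᵥ y = 0 ∧
    (A + Matrix.diagonal D) *ᵥ x = l • x ∧ (A + Matrix.diagonal D) *ᵥ y = m • y ∧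
    |l - E| ≤ ε ∧ |m - E| ≤ ε

lemma exists_ab (α β : ℝ) : ∃ a b : ℝ, a ^ 2 + b ^ 2 = 1 ∧ a * α + b * β = 0 := by
  by_cases h : α ^ 2 + β ^ 2 = 0
  · have : α = 0 := by nlinarith [sq_nonneg α, sq_nonneg β]
    exact ⟨1, 0, by simp, by simp [this]⟩
  · have h0 : 0 < α ^ 2 + β ^ 2 := lt_of_le_of_ne (by positivity) (Ne.symm h)
    have h1 : Real.sqrt (α ^ 2 + β ^ 2) ^ 2 = α ^ 2 + β ^ 2 := Real.sq_sqrt h0.le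
    have h2 := Real.sqrt_pos.2 h0
    refine ⟨β / Real.sqrt (α ^ 2 + β ^ 2), -α / Real.sqrt (α ^ 2 + β ^ 2), ?_, ?_⟩
    · rw [div_pow, div_pow, h1]; field_simp; ring
    · field_simp; ring

lemma bm_eig {A : Matrix (Fin n) (Fin n) ℝ} {E l : ℝ} {D x : Fin n → ℝ}
    (h : (A + Matrix.diagonal D) *ᵥ x = l • x) : Bm A E D *ᵥ x = (l - E) • x := by
  rw [Bm, Matrix.sub_mulVec, h, Matrix.smul_mulVec, Matrix.one_mulVec, sub_smul]

lemma Bad.vec {A : Matrix (Fin n) (Fin n) ℝ} {E ε : ℝ} {D : Fin n → ℝ}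
    (h : Bad A E ε D) (j : Fin n) : ∃ v : Fin n → ℝ, v ⬝ᵥ v = 1 ∧ v j = 0 ∧
      (Bm A E D *ᵥ v) ⬝ᵥ (Bm A E D *ᵥ v) ≤ ε ^ 2 := by
  obtain ⟨x, y, l, m, hx, hy, hxy, hl, hm, hle, hme⟩ := h
  obtain ⟨a, b, hab, h0⟩ := exists_ab (x j) (y j)
  have hyx : y ⬝ᵥ x = 0 := by rw [dotProduct_comm, hxy]
  refine ⟨a • x + b • y, ?_, ?_, ?_⟩
  · simp only [add_dotProduct, dotProduct_add, smul_dotProduct, dotProduct_smul, hx, hy, hxy, hyx,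
      smul_eq_mul]
    linarith
  · simpa using h0
  · rw [Matrix.mulVec_add, Matrix.mulVec_smul, Matrix.mulVec_smul, bm_eig hl, bm_eig hm]
    simp only [add_dotProduct, dotProduct_add, smul_dotProduct, dotProduct_smul, hx, hy, hxy, hyx,
      smul_eq_mul]
    have h1 : (l - E) ^ 2 ≤ ε ^ 2 := sq_le_sq' (abs_le.1 hle).1 (abs_le.1 hle).2
    have h2 : (m - E) ^ 2 ≤ ε ^ 2 := sq_le_sq' (abs_le.1 hme).1 (abs_le.1 hme).2
    nlinarith [mul_le_mul_of_nonneg_left h1 (sq_nonneg a), mul_le_mul_of_nonneg_left h2 (sq_nonneg b)]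

lemma Bad.trace_update {A : Matrix (Fin n) (Fin n) ℝ} (hA : A.IsSymm) {E ε : ℝ} (hε : 0 < ε)
    {D : Fin n → ℝ} (h : Bad A E ε D) (j : Fin n) (t : ℝ) :
    1 ≤ ∑ k, 2 * ε ^ 2 * Km A E ε (Function.update D j t) k k := by
  obtain ⟨v, hv, hvj, hb⟩ := h.vec j
  apply trace_bound hA E hε _ v hv
  have := Bm_update_mulVec A E D j (t - D j) v
  rw [hvj] at this
  simp only [add_sub_cancel, mul_zero, zero_smul, add_zero] at this
  rwa [this]

lemma lint_cauchy (p q : ℝ) (hq : 0 ≤ q) :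
    ∫⁻ t : ℝ, ENNReal.ofReal (q / ((1 + t * p) ^ 2 + t ^ 2 * q ^ 2)) ≤ ENNReal.ofReal Real.pi := by
  rcases hq.eq_or_lt with h | h
  · subst h; simp
  have hr : 0 < p ^ 2 + q ^ 2 := by positivity
  have hγ : 0 < q / (p ^ 2 + q ^ 2) := by positivity
  obtain ⟨γ, hγe⟩ : ∃ γ : NNReal, (γ : ℝ) = q / (p ^ 2 + q ^ 2) := ⟨⟨_, hγ.le⟩, rfl⟩
  have h1 := lintegral_cauchyPDF_eq_one (-(p / (p ^ 2 + q ^ 2)))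
    (γ := γ) (by rintro rfl; simp only [NNReal.coe_zero] at hγe; linarith)
  have h2 : ∀ t : ℝ, ENNReal.ofReal (q / ((1 + t * p) ^ 2 + t ^ 2 * q ^ 2)) =
      ENNReal.ofReal Real.pi * cauchyPDF (-(p / (p ^ 2 + q ^ 2))) γ t := by
    intro t
    rw [cauchyPDF_def, ← ENNReal.ofReal_mul Real.pi_pos.le, cauchyPDFReal_def, hγe]
    congr 1
    have hN : 0 < (1 + t * p) ^ 2 + t ^ 2 * q ^ 2 := by
      by_cases ht : t = 0
      · subst ht; simp
      · have : 0 < t ^ 2 * q ^ 2 := by positivity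
        nlinarith [sq_nonneg (1 + t * p)]
    have hpi := Real.pi_pos
    have e : (t - -(p / (p ^ 2 + q ^ 2))) ^ 2 + (q / (p ^ 2 + q ^ 2)) ^ 2 =
      ((1 + t * p) ^ 2 + t ^ 2 * q ^ 2) / (p ^ 2 + q ^ 2) := by
      field_simp
      ring
    rw [e]
    field_simp
  simp_rw [h2]
  rw [lintegral_const_mul _ (by fun_prop), h1, mul_one]

/-- uniform law -/
def unif (Δ : ℝ) : Measure ℝ := (ENNReal.ofReal (2 * Δ))⁻¹ • volume.restrict (Set.Icc (-Δ) Δ)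

lemma unif_prob {Δ : ℝ} (hΔ : 0 < Δ) : IsProbabilityMeasure (unif Δ) := by
  constructor
  simp only [unif, Measure.smul_apply, smul_eq_mul, Measure.restrict_apply_univ, Real.volume_Icc]
  rw [show Δ - -Δ = 2 * Δ by ring]
  exact ENNReal.inv_mul_cancel (by simpa using hΔ) ENNReal.ofReal_ne_top

lemma lint_unif_le {Δ : ℝ} (f : ℝ → ENNReal) :
    ∫⁻ t, f t ∂(unif Δ) ≤ (ENNReal.ofReal (2 * Δ))⁻¹ * ∫⁻ t, f t := by
  rw [unif, lintegral_smul_measure, smul_eq_mul]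
  gcongr
  exact Measure.restrict_le_self

/-- local density -/
def Fj (A : Matrix (Fin n) (Fin n) ℝ) (E ε : ℝ) (j : Fin n) (D : Fin n → ℝ) : ENNReal :=
  ENNReal.ofReal (2 * ε ^ 2 * Km A E ε D j j)

lemma Fj_meas (A : Matrix (Fin n) (Fin n) ℝ) (E ε : ℝ) (j : Fin n) : Measurable (Fj A E ε j) := by
  have hM : Continuous (fun D : Fin n → ℝ => Mm A E ε D) := by
    unfold Mm Bm
    fun_prop
  unfold Fj Km
  simp_rw [Matrix.inv_def, Ring.inverse_eq_inv', Matrix.smul_apply, smul_eq_mul]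
  have h1 : Measurable (fun D : Fin n → ℝ => (Mm A E ε D).det) := hM.matrix_det.measurable
  have h2 : Measurable (fun D : Fin n → ℝ => (Mm A E ε D).adjugate j j) :=
    (hM.matrix_adjugate.matrix_elem j j).measurable
  fun_prop

lemma Fj_avg {A : Matrix (Fin n) (Fin n) ℝ} (hA : A.IsSymm) (E : ℝ) {ε Δ : ℝ} (hε : 0 < ε)
    (hΔ : 0 < Δ) (j : Fin n) (D : Fin n → ℝ) :
    ∫⁻ t, Fj A E ε j (Function.update D j t) ∂(unif Δ) ≤ ENNReal.ofReal (Real.pi * ε / Δ) := by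
  refine (lint_unif_le _).trans ?_
  obtain ⟨p, q, hq, h⟩ := Km_update hA E hε D j
  have h1 : ∫⁻ t, Fj A E ε j (Function.update D j t) =
      ∫⁻ t, Fj A E ε j (Function.update D j (D j + t)) :=
    (lintegral_add_left_eq_self (fun t => Fj A E ε j (Function.update D j t)) (D j)).symm
  have h2 : ∀ t, Fj A E ε j (Function.update D j (D j + t)) =
      ENNReal.ofReal (2 * ε) * ENNReal.ofReal (q / ((1 + t * p) ^ 2 + t ^ 2 * q ^ 2)) := by
    intro t
    rw [← ENNReal.ofReal_mul (by positivity), ← h t, Fj]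
    congr 1
    ring
  rw [h1]
  simp_rw [h2]
  rw [lintegral_const_mul _ (by fun_prop)]
  calc _ ≤ (ENNReal.ofReal (2 * Δ))⁻¹ * (ENNReal.ofReal (2 * ε) * ENNReal.ofReal Real.pi) := by
        gcongr
        exact lint_cauchy p q hq
    _ = _ := by
        rw [← ENNReal.ofReal_inv_of_pos (by positivity), ← ENNReal.ofReal_mul (by positivity),
          ← ENNReal.ofReal_mul (by positivity)]
        congr 1
        field_simp

lemma lint_mul_le {A : Matrix (Fin n) (Fin n) ℝ} (hA : A.IsSymm) (E : ℝ) {ε Δ : ℝ} (hε : 0 < ε)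
    (hΔ : 0 < Δ) (j : Fin n) (h : (Fin n → ℝ) → ENNReal) (hm : Measurable h)
    (hj : ∀ D t, h (Function.update D j t) = h D) :
    ∫⁻ D, Fj A E ε j D * h D ∂(Measure.pi fun _ : Fin n => unif Δ) ≤
      ENNReal.ofReal (Real.pi * ε / Δ) * ∫⁻ D, h D ∂(Measure.pi fun _ : Fin n => unif Δ) := by
  have := unif_prob hΔ
  rw [← lintegral_const_mul _ hm]
  refine lintegral_le_of_lmarginal_le {j} ((Fj_meas A E ε j).mul hm) (hm.const_mul _) ?_
  rw [lmarginal_singleton, lmarginal_singleton]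
  intro D
  simp only [hj]
  have hFm : Measurable fun t => Fj A E ε j (Function.update D j t) :=
    (Fj_meas A E ε j).comp (measurable_update D)
  rw [lintegral_mul_const _ hFm, lintegral_const,
    measure_univ, mul_one]
  gcongr
  exact Fj_avg hA E hε hΔ j D

lemma lint_Fj_le {A : Matrix (Fin n) (Fin n) ℝ} (hA : A.IsSymm) (E : ℝ) {ε Δ : ℝ} (hε : 0 < ε)
    (hΔ : 0 < Δ) (j : Fin n) :
    ∫⁻ D, Fj A E ε j D ∂(Measure.pi fun _ : Fin n => unif Δ) ≤
      ENNReal.ofReal (Real.pi * ε / Δ) := by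
  have := unif_prob hΔ
  simpa using lint_mul_le hA E hε hΔ j (fun _ => 1) measurable_const (fun _ _ => rfl)

/-- trace -/
def Tr (A : Matrix (Fin n) (Fin n) ℝ) (E ε : ℝ) (D : Fin n → ℝ) : ENNReal := ∑ j, Fj A E ε j D

lemma Tr_meas (A : Matrix (Fin n) (Fin n) ℝ) (E ε : ℝ) : Measurable (Tr A E ε) :=
  Finset.measurable_sum _ fun j _ => Fj_meas A E ε j

lemma lint_Tr_le {A : Matrix (Fin n) (Fin n) ℝ} (hA : A.IsSymm) (E : ℝ) {ε Δ : ℝ} (hε : 0 < ε)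
    (hΔ : 0 < Δ) :
    ∫⁻ D, Tr A E ε D ∂(Measure.pi fun _ : Fin n => unif Δ) ≤
      n * ENNReal.ofReal (Real.pi * ε / Δ) := by
  unfold Tr
  rw [lintegral_finsetSum _ fun j _ => Fj_meas A E ε j]
  refine (Finset.sum_le_sum fun j _ => lint_Fj_le hA E hε hΔ j).trans ?_
  simp

lemma one_le_Tr {A : Matrix (Fin n) (Fin n) ℝ} (hA : A.IsSymm) {E ε : ℝ} (hε : 0 < ε)
    {D : Fin n → ℝ} (h : 1 ≤ ∑ k, 2 * ε ^ 2 * Km A E ε D k k) : 1 ≤ Tr A E ε D := by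
  unfold Tr Fj
  rw [← ENNReal.ofReal_sum_of_nonneg]
  · rw [← ENNReal.ofReal_one]; exact ENNReal.ofReal_le_ofReal h
  · intro i _
    have := Km_diag_nonneg hA E hε D i
    positivity

lemma wegner {A : Matrix (Fin n) (Fin n) ℝ} (hA : A.IsSymm) {ε Δ : ℝ} (hε : 0 < ε)
    (hΔ : 0 < Δ) (S : Set (Fin n → ℝ)) (hS : ∀ D ∈ S, ∃ v : Fin n → ℝ, v ⬝ᵥ v = 1 ∧
      (A + Matrix.diagonal D) *ᵥ v = 0) :
    (Measure.pi fun _ : Fin n => unif Δ) S ≤ n * ENNReal.ofReal (Real.pi * ε / Δ) := by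
  refine le_trans ?_ (lint_Tr_le hA 0 hε hΔ)
  have h1 := mul_meas_ge_le_lintegral (μ := Measure.pi fun _ : Fin n => unif Δ) (Tr_meas A 0 ε) 1
  rw [one_mul] at h1
  refine le_trans (measure_mono ?_) h1
  intro D hD
  obtain ⟨v, hv, h0⟩ := hS D hD
  apply one_le_Tr hA hε
  apply trace_bound hA 0 hε D v hv
  have : Bm A 0 D = A + Matrix.diagonal D := by simp [Bm]
  rw [this, h0]
  simp
  positivity

lemma minami {A : Matrix (Fin n) (Fin n) ℝ} (hA : A.IsSymm) (E : ℝ) {ε Δ : ℝ} (hε : 0 < ε)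
    (hΔ : 0 < Δ) :
    (Measure.pi fun _ : Fin n => unif Δ) {D | Bad A E ε D} ≤
      (n * ENNReal.ofReal (Real.pi * ε / Δ)) ^ 2 := by
  have := unif_prob hΔ
  let L : Fin n → (Fin n → ℝ) → ENNReal := fun j => lmarginal (fun _ => unif Δ) {j} (Tr A E ε)
  have hLm : ∀ j, Measurable (L j) := fun j => (Tr_meas A E ε).lmarginal _
  have hLj : ∀ j D t, L j (Function.update D j t) = L j D := fun j D t =>
    lmarginal_update_of_mem _ (Finset.mem_singleton_self j) _ _ _
  have hLi : ∀ j, ∫⁻ D, L j D ∂(Measure.pi fun _ : Fin n => unif Δ) =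
      ∫⁻ D, Tr A E ε D ∂(Measure.pi fun _ : Fin n => unif Δ) := by
    intro j
    refine lintegral_eq_of_lmarginal_eq {j} (hLm j) (Tr_meas A E ε) ?_
    rw [lmarginal_singleton]
    ext D
    simp only [hLj, lintegral_const, measure_univ, mul_one]
    rfl
  have hG : ∀ j, Measurable fun D => Fj A E ε j D * L j D := fun j => (Fj_meas A E ε j).mul (hLm j)
  have h1 := mul_meas_ge_le_lintegral (μ := Measure.pi fun _ : Fin n => unif Δ)
    (f := fun D => ∑ j, Fj A E ε j D * L j D)
    (Finset.measurable_fun_sum _ fun j _ => hG j) 1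
  rw [one_mul] at h1
  refine (measure_mono ?_).trans (h1.trans ?_)
  · intro D hD
    have hD : Bad A E ε D := hD
    have h2 : ∀ j, 1 ≤ L j D := by
      intro j
      simp only [L, lmarginal_singleton]
      calc (1 : ENNReal) = ∫⁻ _, 1 ∂(unif Δ) := by simp
        _ ≤ _ := lintegral_mono fun t => one_le_Tr hA hε (hD.trace_update hA hε j t)
    have h3 : 1 ≤ Tr A E ε D := by
      have : Nonempty (Fin n) := by
        by_contra hne
        rw [not_nonempty_iff] at hne
        obtain ⟨x, y, l, m, hx, -⟩ := hD
        simp [dotProduct] at hx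
      obtain ⟨j⟩ := this
      apply one_le_Tr hA hε
      simpa using hD.trace_update hA hε j (D j)
    refine h3.trans ?_
    exact Finset.sum_le_sum fun j _ => le_mul_of_one_le_right zero_le (h2 j)
  · rw [lintegral_finsetSum _ fun j _ => hG j]
    have h4 : ∀ j ∈ Finset.univ, ∫⁻ D, Fj A E ε j D * L j D ∂(Measure.pi fun _ : Fin n => unif Δ) ≤
        ENNReal.ofReal (Real.pi * ε / Δ) * (n * ENNReal.ofReal (Real.pi * ε / Δ)) := by
      intro j _
      refine (lint_mul_le hA E hε hΔ j (L j) (hLm j) (hLj j)).trans ?_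
      rw [hLi]
      gcongr
      exact lint_Tr_le hA E hε hΔ
    refine (Finset.sum_le_sum h4).trans (le_of_eq ?_)
    simp
    ring

lemma l2norm_eq (v : Fin n → ℝ) : l2norm v = ‖WithLp.toLp 2 v‖ := by
  rw [EuclideanSpace.norm_eq]
  simp [l2norm]

lemma le_specNorm (A : Matrix (Fin n) (Fin n) ℝ) (v : Fin n → ℝ) (hv : l2norm v ≤ 1) :
    l2norm (A *ᵥ v) ≤ specNorm A := by
  apply le_csSup
  · refine ⟨Real.sqrt (∑ i, ∑ j, A i j ^ 2), ?_⟩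
    rintro c ⟨v, hv, rfl⟩
    apply Real.sqrt_le_sqrt
    apply Finset.sum_le_sum
    intro i _
    have h := Finset.sum_mul_sq_le_sq_mul_sq Finset.univ (fun k => A i k) v
    have hv1 : ∑ k, v k ^ 2 ≤ 1 := by
      simpa [l2norm] using hv
    refine le_trans h ?_
    exact mul_le_of_le_one_right (by positivity) hv1
  · exact ⟨v, hv, rfl⟩

lemma l2norm_diag_le (D v : Fin n → ℝ) {Δ : ℝ} (hΔ : 0 ≤ Δ) (hD : ∀ i, D i ∈ Set.Icc (-Δ) Δ)
    (hv : v ⬝ᵥ v = 1) : l2norm (Matrix.diagonal D *ᵥ v) ≤ Δ := by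
  unfold l2norm
  rw [Real.sqrt_le_left hΔ]
  have hv' : ∑ k, v k ^ 2 = 1 := by simpa [dotProduct, pow_two] using hv
  calc _ ≤ ∑ i, Δ ^ 2 * v i ^ 2 := by
        apply Finset.sum_le_sum
        intro i _
        rw [Matrix.mulVec_diagonal, mul_pow]
        have : D i ^ 2 ≤ Δ ^ 2 := sq_le_sq' (hD i).1 (hD i).2
        gcongr
    _ = _ := by rw [← Finset.mul_sum, hv', mul_one]

lemma eig_bound (A : Matrix (Fin n) (Fin n) ℝ) {Δ l : ℝ} (hΔ : 0 ≤ Δ) (hS : Δ ≤ specNorm A)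
    (D x : Fin n → ℝ) (hD : ∀ i, D i ∈ Set.Icc (-Δ) Δ) (hx : x ⬝ᵥ x = 1)
    (h : (A + Matrix.diagonal D) *ᵥ x = l • x) : |l| ≤ 2 * specNorm A := by
  have hx1 : l2norm x = 1 := by
    have hv' : ∑ k, x k ^ 2 = 1 := by simpa [dotProduct, pow_two] using hx
    simp [l2norm, hv']
  have h1 : l2norm (l • x) = |l| := by
    rw [l2norm_eq, WithLp.toLp_smul, norm_smul, ← l2norm_eq, hx1, mul_one, Real.norm_eq_abs]
  rw [← h1, ← h, Matrix.add_mulVec, l2norm_eq, WithLp.toLp_add]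
  refine (norm_add_le _ _).trans ?_
  rw [← l2norm_eq, ← l2norm_eq]
  have := le_specNorm A x hx1.le
  have := l2norm_diag_le D x hΔ hD hx
  linarith

lemma box_null {Δ : ℝ} (hΔ : 0 < Δ) : (Measure.pi fun _ : Fin n => unif Δ)
    {D | ¬ ∀ i, D i ∈ Set.Icc (-Δ) Δ} = 0 := by
  have := unif_prob hΔ
  rw [← ae_iff, ae_all_iff]
  intro i
  have h1 : ∀ᵐ t ∂(unif Δ), t ∈ Set.Icc (-Δ) Δ := by
    unfold unif
    exact Measure.ae_smul_measure (ae_restrict_mem measurableSet_Icc) _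
  exact (measurePreserving_eval (fun _ : Fin n => unif Δ) i).quasiMeasurePreserving.ae h1

lemma cols {H W : Matrix (Fin n) (Fin n) ℝ} {lam : Fin n → ℝ} (hW : Wᵀ * W = 1)
    (hH : H = W * Matrix.diagonal lam * Wᵀ) (i : Fin n) :
    (fun k => W k i) ⬝ᵥ (fun k => W k i) = 1 ∧ H *ᵥ (fun k => W k i) = lam i • (fun k => W k i) ∧
    ∀ j, i ≠ j → (fun k => W k i) ⬝ᵥ (fun k => W k j) = 0 := by
  have hd : ∀ j, (fun k => W k i) ⬝ᵥ (fun k => W k j) = (1 : Matrix (Fin n) (Fin n) ℝ) i j := by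
    intro j
    rw [← hW]
    simp [Matrix.mul_apply, dotProduct]
  refine ⟨by simp [hd], ?_, fun j hj => by rw [hd, Matrix.one_apply_ne hj]⟩
  have hHW : H * W = W * Matrix.diagonal lam := by
    rw [hH, Matrix.mul_assoc, hW, Matrix.mul_one]
  ext k
  have := congrFun (congrFun hHW k) i
  rw [Matrix.mul_diagonal] at this
  simp only [Pi.smul_apply, smul_eq_mul]
  rw [mul_comm, ← this]
  rfl

lemma numeric {n : ℕ} (hn : 1 ≤ n) {S δ Δ η N : ℝ} (hδ : 0 < δ) (hδ1 : δ < 1) (hΔ : 0 < Δ)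
    (hS : Δ ≤ S) (hη : η = 2 * S * (δ / (2000 * (n : ℝ) ^ 2) * (Δ ^ 2 / S ^ 2)))
    (hN : N ≤ 4 * S / η + 3) :
    N * (n * (Real.pi * (2 * η) / Δ)) ^ 2 ≤ δ / 2 := by
  have hS0 : 0 < S := by linarith
  have hn' : (1 : ℝ) ≤ n := by exact_mod_cast hn
  have hn0 : (0 : ℝ) < n := by linarith
  have hη0 : 0 < η := by rw [hη]; positivity
  have e1 : η * S = 2 * δ * Δ ^ 2 / (2000 * (n : ℝ) ^ 2) := by rw [hη]; field_simp
  have e2 : η ≤ S := by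
    have h1 : δ / (2000 * (n : ℝ) ^ 2) ≤ 1 / 2 := by
      rw [div_le_iff₀ (by positivity)]
      nlinarith
    have h2 : Δ ^ 2 / S ^ 2 ≤ 1 := by
      rw [div_le_one (by positivity)]
      gcongr
    have h3 : δ / (2000 * (n : ℝ) ^ 2) * (Δ ^ 2 / S ^ 2) ≤ 1 / 2 * 1 := by gcongr
    rw [hη]
    nlinarith
  have hpi : Real.pi ^ 2 ≤ 10 := by nlinarith [Real.pi_lt_d2, Real.pi_pos]
  calc N * (n * (Real.pi * (2 * η) / Δ)) ^ 2
      ≤ (4 * S / η + 3) * (n * (Real.pi * (2 * η) / Δ)) ^ 2 := by gcongr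
    _ = (4 * (η * S) + 3 * (η * η)) * (4 * n ^ 2 * Real.pi ^ 2 / Δ ^ 2) := by
        field_simp
        ring
    _ ≤ (4 * (η * S) + 3 * (η * S)) * (4 * n ^ 2 * 10 / Δ ^ 2) := by gcongr
    _ = δ * (560 / 2000) := by
        rw [e1]; field_simp; ring
    _ ≤ δ / 2 := by linarith

end DPG

/-- Lemma `lem:diagonal-perturb-gaps`: there is a universal constant `C`
such that, for a symmetric `A ∈ ℝ^{n×n}` and a random diagonal `D` with i.i.d.
`Uniform[-Δ, Δ]` entries (`0 < Δ ≤ ‖A‖₂`), with probability `≥ 1 - δ` every pair of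
consecutive eigenvalues (sorted decreasingly) of `Ã = A + D` satisfies
`|λ_i - λ_{i+1}| / |λ_{i+1}| ≥ (δ/(C n²))·(Δ²/‖A‖₂²)`.  The eigenvalues are supplied
through an arbitrary orthogonal eigendecomposition of `Ã` with decreasing eigenvalues. -/
theorem diagonal_perturbation_gap :
    ∃ C : ℝ, 0 < C ∧
      ∀ (n : ℕ) (A : Matrix (Fin n) (Fin n) ℝ), A.IsSymm →
      ∀ δ Δ : ℝ, δ ∈ Set.Ioo (0 : ℝ) 1 → 0 < Δ → Δ ≤ specNorm A →
        ENNReal.ofReal (1 - δ) ≤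
          (Measure.pi fun _ : Fin n =>
              (ENNReal.ofReal (2 * Δ))⁻¹ • volume.restrict (Set.Icc (-Δ) Δ))
            {dvec : Fin n → ℝ |
              ∀ (W : Matrix (Fin n) (Fin n) ℝ) (lam : Fin n → ℝ),
                Wᵀ * W = 1 → (∀ i j : Fin n, i ≤ j → lam j ≤ lam i) →
                A + Matrix.diagonal dvec = W * Matrix.diagonal lam * Wᵀ →
                ∀ (i : Fin n) (h : (i : ℕ) + 1 < n),
                  δ / (C * (n : ℝ) ^ 2) * (Δ ^ 2 / specNorm A ^ 2) ≤
                    |lam i - lam ⟨(i : ℕ) + 1, h⟩| / |lam ⟨(i : ℕ) + 1, h⟩|} := by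
  refine ⟨2000, by norm_num, ?_⟩
  intro n A hA δ Δ hδ hΔ hS
  obtain ⟨hδ0, hδ1⟩ := hδ
  change _ ≤ (Measure.pi fun _ : Fin n => DPG.unif Δ) _
  have := DPG.unif_prob hΔ
  set μ := Measure.pi fun _ : Fin n => DPG.unif Δ with hμ
  rcases Nat.eq_zero_or_pos n with h0 | hn
  · subst h0
    have : ∀ S : Set (Fin 0 → ℝ), S = Set.univ → ENNReal.ofReal (1 - δ) ≤ μ S := by
      rintro S rfl
      rw [measure_univ, ENNReal.ofReal_le_one]
      linarith
    apply this
    ext D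
    simp
  have hn' : (1 : ℝ) ≤ n := by exact_mod_cast hn
  have hn0 : (0 : ℝ) < n := by linarith
  set S := specNorm A with hSdef
  have hS0 : 0 < S := by linarith
  set g := δ / (2000 * (n : ℝ) ^ 2) * (Δ ^ 2 / S ^ 2) with hg
  set η := 2 * S * g with hη
  have hg0 : 0 < g := by positivity
  have hη0 : 0 < η := by positivity
  set M : ℤ := ⌊2 * S / η⌋ + 1 with hM
  set good := {dvec : Fin n → ℝ |
              ∀ (W : Matrix (Fin n) (Fin n) ℝ) (lam : Fin n → ℝ),
                Wᵀ * W = 1 → (∀ i j : Fin n, i ≤ j → lam j ≤ lam i) →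
                A + Matrix.diagonal dvec = W * Matrix.diagonal lam * Wᵀ →
                ∀ (i : Fin n) (h : (i : ℕ) + 1 < n),
                  g ≤ |lam i - lam ⟨(i : ℕ) + 1, h⟩| / |lam ⟨(i : ℕ) + 1, h⟩|} with hgood
  set Z := {D : Fin n → ℝ | ∃ v : Fin n → ℝ, v ⬝ᵥ v = 1 ∧ (A + Matrix.diagonal D) *ᵥ v = 0} with hZ
  set Bx := {D : Fin n → ℝ | ¬ ∀ i, D i ∈ Set.Icc (-Δ) Δ} with hBx
  set U := ⋃ m ∈ Finset.Icc (-M) M, {D : Fin n → ℝ | DPG.Bad A (m * η) (2 * η) D} with hU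
  have hsub : goodᶜ ⊆ Z ∪ (Bx ∪ U) := by
    intro D hD
    by_cases hb : ∀ i, D i ∈ Set.Icc (-Δ) Δ
    swap
    · exact Or.inr (Or.inl hb)
    simp only [hgood, Set.mem_compl_iff, Set.mem_ofPred_eq] at hD
    push Not at hD
    obtain ⟨W, lam, hW, hlam, hH, i, hi, hlt⟩ := hD
    obtain ⟨hx1, hx2, hx3⟩ := DPG.cols hW hH i
    obtain ⟨hy1, hy2, -⟩ := DPG.cols hW hH ⟨(i : ℕ) + 1, hi⟩
    have hxy := hx3 ⟨(i : ℕ) + 1, hi⟩ (by intro h; have := congrArg Fin.val h; simp at this)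
    have hle : lam ⟨(i : ℕ) + 1, hi⟩ ≤ lam i := hlam _ _ (by rw [Fin.le_def]; simp)
    set l := lam i
    set l' := lam ⟨(i : ℕ) + 1, hi⟩
    by_cases hl : l' = 0
    · left
      exact ⟨_, hy1, by rw [hy2, hl, zero_smul]⟩
    right; right
    have hlb : |l'| ≤ 2 * S := DPG.eig_bound A hΔ.le hS D _ hb hy1 hy2
    rw [div_lt_iff₀ (abs_pos.2 hl), abs_of_nonneg (by linarith)] at hlt
    have hgap : l - l' < η := by
      have : g * |l'| ≤ g * (2 * S) := by gcongr
      rw [hη]; linarith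
    have hf1 : (⌊l' / η⌋ : ℝ) * η ≤ l' := by
      rw [← le_div_iff₀ hη0]; exact Int.floor_le _
    have hf2 : l' < (⌊l' / η⌋ + 1 : ℝ) * η := by
      rw [← div_lt_iff₀ hη0]; exact Int.lt_floor_add_one _
    rw [hU]
    simp only [Set.mem_iUnion, Set.mem_ofPred_eq]
    refine ⟨⌊l' / η⌋, ?_, _, _, l, l', hx1, hy1, hxy, hx2, hy2, ?_, ?_⟩
    · rw [Finset.mem_Icc]
      obtain ⟨ha, hb⟩ := abs_le.1 hlb
      constructor
      · rw [Int.le_floor, hM]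
        push_cast
        have h1 := Int.lt_floor_add_one (2 * S / η)
        have h2 : -(2 * S / η) ≤ l' / η := by rw [← neg_div]; gcongr
        linarith
      · have : ⌊l' / η⌋ ≤ ⌊2 * S / η⌋ := Int.floor_le_floor (by gcongr)
        omega
    · rw [abs_le]; constructor <;> nlinarith
    · rw [abs_le]; constructor <;> nlinarith
  have hZm : μ Z ≤ ENNReal.ofReal (δ / 2) := by
    have hpi := Real.pi_pos
    refine (DPG.wegner hA (ε := δ * Δ / (2 * Real.pi * n)) (by positivity) hΔ Z
      (fun D hD => hD)).trans (le_of_eq ?_)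
    rw [← ENNReal.ofReal_natCast, ← ENNReal.ofReal_mul (by positivity)]
    congr 1
    field_simp
  have hUm : μ U ≤ ENNReal.ofReal (δ / 2) := by
    have hpi := Real.pi_pos
    refine (measure_biUnion_finset_le _ _).trans ?_
    refine (Finset.sum_le_sum fun (m : ℤ) _ => DPG.minami hA ((m : ℝ) * η) (ε := 2 * η) (by positivity) hΔ).trans ?_
    have hM0 : 0 ≤ M := by
      have : 0 ≤ ⌊2 * S / η⌋ := Int.floor_nonneg.2 (by positivity)
      omega
    rw [Finset.sum_const, nsmul_eq_mul, ← ENNReal.ofReal_natCast, ← ENNReal.ofReal_natCast,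
      ← ENNReal.ofReal_mul (by positivity), ← ENNReal.ofReal_pow (by positivity),
      ← ENNReal.ofReal_mul (by positivity)]
    apply ENNReal.ofReal_le_ofReal
    refine DPG.numeric hn hδ0 hδ1 hΔ hS hη ?_
    rw [Int.card_Icc]
    have : (((M + 1 - -M).toNat : ℕ) : ℝ) = 2 * (M : ℝ) + 1 := by
      have : (((M + 1 - -M).toNat : ℕ) : ℤ) = 2 * M + 1 := by omega
      exact_mod_cast this
    rw [this, hM]
    push_cast
    have h1 := Int.floor_le (2 * S / η)
    have h2 : 4 * S / η = 2 * (2 * S / η) := by ring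
    rw [h2]; linarith
  have hc : μ goodᶜ ≤ ENNReal.ofReal δ := by
    calc μ goodᶜ ≤ μ (Z ∪ (Bx ∪ U)) := measure_mono hsub
      _ ≤ μ Z + (μ Bx + μ U) := (measure_union_le _ _).trans (by gcongr; exact measure_union_le _ _)
      _ ≤ ENNReal.ofReal (δ / 2) + (0 + ENNReal.ofReal (δ / 2)) := by
          gcongr
          exact (DPG.box_null hΔ).le
      _ = ENNReal.ofReal δ := by
          rw [zero_add, ← ENNReal.ofReal_add (by linarith) (by linarith)]
          congr 1; ring
  have h1 : (1 : ENNReal) ≤ μ good + ENNReal.ofReal δ := by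
    calc (1 : ENNReal) = μ Set.univ := measure_univ.symm
      _ = μ (good ∪ goodᶜ) := by rw [Set.union_compl_self]
      _ ≤ μ good + μ goodᶜ := measure_union_le _ _
      _ ≤ _ := by gcongr
  rw [ENNReal.ofReal_sub _ hδ0.le, ENNReal.ofReal_one]
  exact tsub_le_iff_right.2 h1

end
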